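/- Let A and B be real n×n matrices with A antisymmetric and B symmetric positive definite, and let λ ≥ 0 be a real number. Then (−1)^{⌊n/2⌋} · pf [[−λA, B], [−B, A]] = det B holds if and only if λA = 0. -/

import Mathlib

open Matrix BigOperators

/-- The pfaffian of a `2m × 2m` real matrix, via the symmetrized sum over all
permutations. -/
noncomputable def pf {m : ℕ} (C : Matrix (Fin (2 * m)) (Fin (2 * m)) ℝ) : ℝ :=
  (1 / (m.factorial * 2 ^ m) : ℝ) *
    ∑ π : Equiv.Perm (Fin (2 * m)),
      ((Equiv.Perm.sign π : ℤ) : ℝ) *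
        ∏ i : Fin m, C (π ⟨2 * i.val, by omega⟩) (π ⟨2 * i.val + 1, by omega⟩)

/-- The equivalence used to view a block `2n × 2n` matrix (indexed by `Fin n ⊕ Fin n`)
as a matrix indexed by `Fin (2 * n)`. -/
def blockIndex (n : ℕ) : (Fin n ⊕ Fin n) ≃ Fin (2 * n) :=
  finSumFinEquiv.trans (finCongr (by omega))

/-!
Replacing `M` by `P * M * Pᵀ` multiplies `pf M` by `det P`: as a function of the rows of `P`, the
pfaffian of `P * M * Pᵀ` is an alternating form of top degree.
Write `B = Cᵀ * C` and `A = Cᵀ * A' * C`; congruence by `diag(Cᵀ, Cᵀ)` reduces the evaluation of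
the block matrix to the case `B = 1`. There `Q = √(1 + λ A'ᵀ A')` commutes with `A'`, and
congruence by `[[1 + Q, -λA'], [0, 1]]` kills the top left block and leaves `Q * (1 + Q)` in the
top right one. Since a vanishing top left block makes the pfaffian, up to sign, the determinant of
the top right one, the signed pfaffian is `det B * √det(1 + λ A'ᵀ A')`. It equals `det B` exactly
when the positive semidefinite matrix `λ A'ᵀ A'` vanishes.
The sign `(-1) ^ (n / 2)` is that of the shuffle taking the pairs `(2i, 2i + 1)` to `(i, n + i)`.
-/

open Equiv Sum
open scoped Nat

section Pfaffian

variable {ι R : Type*} [Fintype ι] [DecidableEq ι] [CommRing R]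

/-- The unnormalised pfaffian of a matrix indexed by `ι ⊕ ι`, the index `inl i` being paired with
`inr i`: for an antisymmetric matrix it is `(card ι)! * 2 ^ card ι` times the pfaffian. Keeping
it unnormalised makes sense over any commutative ring, and `ι` needs no order. -/
def pfaffianSum (C : Matrix (ι ⊕ ι) (ι ⊕ ι) R) : R :=
  ∑ σ : Perm (ι ⊕ ι), (Perm.sign σ : ℤ) * ∏ i, C (σ (inl i)) (σ (inr i))

/-- The product over `i` of the values of the bilinear form `C` at the pairs of vectors
`(v (inl i), v (inr i))`, as a multilinear map. Its alternatization at the rows of `P` is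
`pfaffianSum (P * C * Pᵀ)`. -/
def pairingProd (C : Matrix (ι ⊕ ι) (ι ⊕ ι) R) :
    MultilinearMap R (fun _ : ι ⊕ ι ↦ ι ⊕ ι → R) R :=
  MultilinearMap.mk' (fun v ↦ ∏ i, v (inl i) ⬝ᵥ C *ᵥ v (inr i))
    (by
      rintro v (j | j) x y
      · simp [Sum.update_inl_apply_inl, Function.apply_update (fun i w ↦ w ⬝ᵥ C *ᵥ v (inr i)),
          Finset.prod_update_of_mem, add_dotProduct, add_mul]
      · simp [Sum.update_inr_apply_inr, Function.apply_update (fun i w ↦ v (inl i) ⬝ᵥ C *ᵥ w),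
          Finset.prod_update_of_mem, dotProduct_add, mulVec_add, add_mul])
    (by
      rintro v (j | j) c x
      · simp [Sum.update_inl_apply_inl, Function.apply_update (fun i w ↦ w ⬝ᵥ C *ᵥ v (inr i)),
          Finset.prod_update_of_mem, mul_assoc]
      · simp [Sum.update_inr_apply_inr, Function.apply_update (fun i w ↦ v (inl i) ⬝ᵥ C *ᵥ w),
          Finset.prod_update_of_mem, mulVec_smul, mul_assoc])

theorem alternatization_pairingProd_apply (C : Matrix (ι ⊕ ι) (ι ⊕ ι) R)
    (v : ι ⊕ ι → ι ⊕ ι → R) :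
    (pairingProd C).alternatization v = pfaffianSum (of v * C * (of v)ᵀ) := by
  rw [MultilinearMap.alternatization_apply]
  refine Finset.sum_congr rfl fun σ _ ↦ ?_
  rw [Units.smul_def, zsmul_eq_mul, Matrix.mul_assoc]
  rfl

theorem pfaffianSum_mul_mul_transpose (P C : Matrix (ι ⊕ ι) (ι ⊕ ι) R) :
    pfaffianSum (P * C * Pᵀ) = P.det * pfaffianSum C := by
  have hbasis : of ⇑(Pi.basisFun R (ι ⊕ ι)) = 1 := by
    ext; simp [one_apply, Pi.single_apply, eq_comm]
  have hdet : (Pi.basisFun R (ι ⊕ ι)).det (of.symm P) = P.det := Pi.basisFun_det_apply _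
  have h := congrArg (fun f ↦ f (of.symm P))
    ((pairingProd C).alternatization.eq_smul_basis_det (Pi.basisFun R (ι ⊕ ι)))
  simp only [AlternatingMap.smul_apply, alternatization_pairingProd_apply] at h
  rwa [apply_symm_apply, hbasis, transpose_one, Matrix.mul_one, Matrix.one_mul, hdet,
    smul_eq_mul, mul_comm] at h

theorem pfaffianSum_fromBlocks_mul_mul_transpose (P W X Y Z : Matrix ι ι R) :
    pfaffianSum (fromBlocks (P * W * Pᵀ) (P * X * Pᵀ) (P * Y * Pᵀ) (P * Z * Pᵀ)) =
      P.det ^ 2 * pfaffianSum (fromBlocks W X Y Z) := by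
  have h := pfaffianSum_mul_mul_transpose (fromBlocks P 0 0 P) (fromBlocks W X Y Z)
  simpa [fromBlocks_transpose, fromBlocks_multiply, sq] using h

end Pfaffian

section StandardForm

variable {ι : Type*}

theorem boolProdEquivSum_false (i : ι) : boolProdEquivSum ι (false, i) = inl i := rfl

theorem boolProdEquivSum_true (i : ι) : boolProdEquivSum ι (true, i) = inr i := rfl

/-- The permutation of `ι ⊕ ι` that permutes the pairs `{inl i, inr i}` by `p.1`, after permuting
the two members of the `i`-th pair by `p.2 i`. These are the permutations that contribute to the
pfaffian of the standard symplectic matrix. -/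
def pairPerm (p : Perm ι × (ι → Perm Bool)) : Perm (ι ⊕ ι) :=
  (boolProdEquivSum ι).permCongr ((prodCongrLeft p.2).trans (prodCongrRight fun _ ↦ p.1))

theorem pairPerm_apply (p : Perm ι × (ι → Perm Bool)) (b : Bool) (i : ι) :
    pairPerm p (boolProdEquivSum ι (b, i)) = boolProdEquivSum ι (p.2 i b, p.1 i) := by
  simp only [pairPerm, permCongr_apply, symm_apply_apply]
  rfl

theorem pairPerm_injective : Function.Injective (pairPerm (ι := ι)) := by
  intro p q h
  have h' (b : Bool) (i : ι) : p.2 i b = q.2 i b ∧ p.1 i = q.1 i := by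
    have := congrArg (fun σ ↦ σ (boolProdEquivSum ι (b, i))) h
    simpa only [pairPerm_apply, EmbeddingLike.apply_eq_iff_eq, Prod.mk.injEq] using this
  exact Prod.ext (Equiv.ext fun i ↦ (h' true i).2) (funext fun i ↦ Equiv.ext fun b ↦ (h' b i).1)

theorem sign_pairPerm [Fintype ι] [DecidableEq ι] (p : Perm ι × (ι → Perm Bool)) :
    Perm.sign (pairPerm p) = ∏ i, Perm.sign (p.2 i) := by
  simp [pairPerm, Perm.sign_trans, Perm.sign_prodCongrLeft, Perm.sign_prodCongrRight]

theorem exists_pairPerm_eq [Finite ι] {σ : Perm (ι ⊕ ι)}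
    (hσ : ∀ i, σ (inr i) = (σ (inl i)).swap) : ∃ p, pairPerm p = σ := by
  let E := boolProdEquivSum ι
  have symm_swap : ∀ x : ι ⊕ ι, E.symm x.swap = (!(E.symm x).1, (E.symm x).2) := by
    rintro (i | i) <;> rfl
  have symm_inr (i : ι) :
      E.symm (σ (inr i)) = (!(E.symm (σ (inl i))).1, (E.symm (σ (inl i))).2) := by
    rw [hσ, symm_swap]
  have pair_eq (b : Bool) (i : ι) : (E.symm (σ (E (b, i)))).2 = (E.symm (σ (inl i))).2 := by
    cases b
    · rfl
    · exact (congrArg Prod.snd (symm_inr i) :)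
  have pair_bijective : Function.Bijective fun i ↦ (E.symm (σ (inl i))).2 := by
    refine Finite.surjective_iff_bijective.1 fun j ↦ ?_
    obtain ⟨⟨b, i⟩, hi⟩ := (E.trans σ).surjective (inl j)
    exact ⟨i, (pair_eq b i).symm.trans (congrArg (fun x ↦ (E.symm x).2) hi)⟩
  have member_bijective (i : ι) : Function.Bijective fun b ↦ (E.symm (σ (E (b, i)))).1 := by
    refine Finite.injective_iff_bijective.1 ?_
    have h : (E.symm (σ (E (true, i)))).1 = !(E.symm (σ (E (false, i)))).1 :=
      congrArg Prod.fst (symm_inr i)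
    rintro (_ | _) (_ | _) hab <;> simp_all
  refine ⟨(.ofBijective _ pair_bijective, fun i ↦ .ofBijective _ (member_bijective i)),
    Equiv.ext fun x ↦ ?_⟩
  obtain ⟨⟨b, i⟩, rfl⟩ := E.surjective x
  rw [pairPerm_apply, ← E.eq_symm_apply]
  exact Prod.ext rfl (pair_eq b i).symm

variable {R : Type*} [DecidableEq ι] [CommRing R]

theorem neg_J_apply_eq_zero {x y : ι ⊕ ι} (h : y ≠ x.swap) : (-J ι R) x y = 0 := by
  rcases x with i | i <;> rcases y with j | j <;> simp_all [J, one_apply, eq_comm]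

variable [Fintype ι]

theorem sign_mul_prod_neg_J_pairPerm (p : Perm ι × (ι → Perm Bool)) :
    ((Perm.sign (pairPerm p) : ℤ) : R) *
      ∏ i, (-J ι R) (pairPerm p (inl i)) (pairPerm p (inr i)) = 1 := by
  have perm_bool (t : Perm Bool) : t = 1 ∨ t = swap false true := by decide +revert
  rw [sign_pairPerm]
  push_cast
  rw [← Finset.prod_mul_distrib]
  refine Finset.prod_eq_one fun i _ ↦ ?_
  rw [← boolProdEquivSum_false, ← boolProdEquivSum_true, pairPerm_apply, pairPerm_apply]
  rcases perm_bool (p.2 i) with h | h <;> simp [h, J, boolProdEquivSum]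

theorem pfaffianSum_neg_J :
    pfaffianSum (-J ι R) = (Fintype.card ι)! * 2 ^ Fintype.card ι := by
  have off_range (σ : Perm (ι ⊕ ι)) (hσ : σ ∉ Set.range pairPerm) :
      (Perm.sign σ : ℤ) * ∏ i, (-J ι R) (σ (inl i)) (σ (inr i)) = 0 := by
    obtain ⟨i, hi⟩ := not_forall.1 (mt exists_pairPerm_eq hσ)
    rw [Finset.prod_eq_zero (Finset.mem_univ i) (neg_J_apply_eq_zero hi), mul_zero]
  calc pfaffianSum (-J ι R)
      = ∑ _p : Perm ι × (ι → Perm Bool), (1 : R) :=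
        (Finset.sum_of_injOn pairPerm pairPerm_injective.injOn (by simp)
          (fun σ _ hσ ↦ off_range σ (by simpa using hσ))
          fun p _ ↦ (sign_mul_prod_neg_J_pairPerm p).symm).symm
    _ = (Fintype.card ι)! * 2 ^ Fintype.card ι := by simp [Fintype.card_perm]

theorem pfaffianSum_fromBlocks_zero₁₁ (B S : Matrix ι ι R) :
    pfaffianSum (fromBlocks 0 B (-Bᵀ) (S - Sᵀ)) =
      B.det * ((Fintype.card ι)! * 2 ^ Fintype.card ι) := by
  have factorization : fromBlocks 0 B (-Bᵀ) (S - Sᵀ) =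
      fromBlocks B 0 S 1 * -J ι R * (fromBlocks B 0 S 1)ᵀ := by
    simp [J, fromBlocks_neg, fromBlocks_transpose, fromBlocks_multiply, sub_eq_neg_add]
  rw [factorization, pfaffianSum_mul_mul_transpose, pfaffianSum_neg_J, det_fromBlocks_zero₁₂,
    det_one, mul_one]

end StandardForm

section Evaluation

variable {ι R : Type*} [Fintype ι] [DecidableEq ι] [CommRing R]

theorem fromBlocks_mul_mul_transpose_of_sq_eq {A Q : Matrix ι ι R} {l : R} (hA : Aᵀ = -A)
    (hQ : Qᵀ = Q) (hAQ : Commute A Q) (hsq : Q * Q = 1 - l • (A * A)) :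
    fromBlocks (1 + Q) (-(l • A)) 0 1 * fromBlocks (-(l • A)) 1 (-1) A *
        (fromBlocks (1 + Q) (-(l • A)) 0 1)ᵀ =
      fromBlocks 0 (Q * (1 + Q)) (-(Q * (1 + Q))) A := by
  have hcomm : A * (1 + Q) = (1 + Q) * A := by rw [mul_add, add_mul, hAQ.eq, one_mul, mul_one]
  have hoff : 1 + Q - l • (A * A) = Q * (1 + Q) := by rw [mul_add, hsq, mul_one]; abel
  have hleft : fromBlocks (1 + Q) (-(l • A)) 0 1 * fromBlocks (-(l • A)) 1 (-1) A =
      fromBlocks (-(l • (Q * A))) (Q * (1 + Q)) (-1) A := by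
    rw [fromBlocks_multiply, ← hoff]
    simp [add_mul, sub_eq_add_neg]
  have htopLeft : -(l • (Q * A)) * (1 + Q)ᵀ + Q * (1 + Q) * (-(l • A))ᵀ = 0 := by
    simp [hA, hQ, Matrix.mul_assoc, hcomm]
  have hbottomLeft : -1 * (1 + Q)ᵀ + A * (-(l • A))ᵀ = -(Q * (1 + Q)) := by
    rw [← hoff, transpose_add, transpose_neg, transpose_smul, transpose_one, hA, hQ, smul_neg,
      neg_neg, mul_smul_comm, neg_one_mul]
    abel
  rw [hleft, fromBlocks_transpose, fromBlocks_multiply, htopLeft, hbottomLeft]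
  simp

theorem pfaffianSum_fromBlocks_of_sq_eq [Invertible (2 : R)] {A Q : Matrix ι ι R} {l : R}
    (hA : Aᵀ = -A) (hQ : Qᵀ = Q) (hAQ : Commute A Q) (hsq : Q * Q = 1 - l • (A * A))
    (hunit : IsUnit (1 + Q).det) :
    pfaffianSum (fromBlocks (-(l • A)) 1 (-1) A) =
      Q.det * ((Fintype.card ι)! * 2 ^ Fintype.card ι) := by
  have hsymm : (Q * (1 + Q))ᵀ = Q * (1 + Q) := by simp [hQ, mul_add]
  have hhalf : ⅟(2 : R) • A - (⅟(2 : R) • A)ᵀ = A := by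
    rw [transpose_smul, hA, smul_neg, sub_neg_eq_add, ← add_smul, invOf_two_add_invOf_two,
      one_smul]
  refine hunit.mul_left_cancel ?_
  calc (1 + Q).det * pfaffianSum (fromBlocks (-(l • A)) 1 (-1) A)
      = pfaffianSum (fromBlocks 0 (Q * (1 + Q)) (-(Q * (1 + Q))ᵀ)
          (⅟(2 : R) • A - (⅟(2 : R) • A)ᵀ)) := by
        rw [hsymm, hhalf, ← fromBlocks_mul_mul_transpose_of_sq_eq hA hQ hAQ hsq,
          pfaffianSum_mul_mul_transpose, det_fromBlocks_zero₂₁, det_one, mul_one]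
    _ = (1 + Q).det * (Q.det * ((Fintype.card ι)! * 2 ^ Fintype.card ι)) := by
        rw [pfaffianSum_fromBlocks_zero₁₁, det_mul, mul_comm Q.det, mul_assoc]

open scoped MatrixOrder in
theorem pfaffianSum_fromBlocks_eq_sqrt_det {A : Matrix ι ι ℝ} (hA : Aᵀ = -A) {l : ℝ}
    (hl : 0 ≤ l) :
    pfaffianSum (fromBlocks (-(l • A)) 1 (-1) A) =
      √(1 + l • (Aᵀ * A)).det * ((Fintype.card ι)! * 2 ^ Fintype.card ι) := by
  set H := 1 + l • (Aᵀ * A) with hH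
  have hpos : H.PosSemidef := PosSemidef.one.add ((posSemidef_conjTranspose_mul_self A).smul hl)
  have hsqrt : (CFC.sqrt H).PosSemidef := (CFC.sqrt_nonneg H).posSemidef
  have htranspose : (CFC.sqrt H)ᵀ = CFC.sqrt H := by
    rw [← conjTranspose_eq_transpose_of_trivial, hsqrt.isHermitian.eq]
  have hcomm : Commute H A := by
    simp [hH, hA, Commute, SemiconjBy, add_mul, mul_add, mul_assoc]
  have hsq : CFC.sqrt H * CFC.sqrt H = 1 - l • (A * A) := by
    rw [CFC.sqrt_mul_sqrt_self H hpos.nonneg, hH, hA, neg_mul, smul_neg, sub_eq_add_neg]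
  rw [pfaffianSum_fromBlocks_of_sq_eq hA htranspose
    (hcomm.cfcₙ_nnreal NNReal.sqrt).symm hsq (PosDef.one.add_posSemidef hsqrt).det_pos.ne'.isUnit,
    hpos.det_sqrt, RCLike.sqrt_real]

theorem pfaffianSum_fromBlocks_transpose_mul_self {A : Matrix ι ι ℝ} (hA : Aᵀ = -A) {l : ℝ}
    (hl : 0 ≤ l) (C : Matrix ι ι ℝ) :
    pfaffianSum (fromBlocks (-(l • (Cᵀ * A * C))) (Cᵀ * C) (-(Cᵀ * C)) (Cᵀ * A * C)) =
      (Cᵀ * C).det * √(1 + l • (Aᵀ * A)).det *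
        ((Fintype.card ι)! * 2 ^ Fintype.card ι) := by
  have h := pfaffianSum_fromBlocks_mul_mul_transpose Cᵀ (-(l • A)) 1 (-1) A
  rw [pfaffianSum_fromBlocks_eq_sqrt_det hA hl, ← mul_assoc, det_transpose] at h
  simpa [sq] using h

end Evaluation

section DetOneAdd

variable {ι 𝕜 : Type*} [Fintype ι] [DecidableEq ι] [RCLike 𝕜] {H : Matrix ι ι 𝕜}

theorem det_one_add_eq_prod (hH : H.IsHermitian) :
    (1 + H).det = ∏ i, (1 + hH.eigenvalues i : 𝕜) := by
  have hneg : scalar ι (-1) - H = -(1 + H) := by rw [map_neg, map_one, neg_add']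
  have h : (-1) ^ Fintype.card ι * (1 + H).det = ∏ i, -(1 + hH.eigenvalues i : 𝕜) := by
    rw [← det_neg, ← hneg, ← eval_charpoly, hH.charpoly_eq, Polynomial.eval_prod]
    simp [sub_eq_add_neg, add_comm]
  rw [Finset.prod_neg, Finset.card_univ] at h
  exact (isUnit_neg_one.pow _).mul_left_cancel h

open scoped ComplexOrder

theorem one_lt_det_one_add (hH : H.PosSemidef) (hne : H ≠ 0) : 1 < (1 + H).det := by
  obtain ⟨i, hi⟩ := Function.ne_iff.1 (mt hH.1.eigenvalues_eq_zero_iff.1 hne)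
  have hnonneg := hH.eigenvalues_nonneg
  have h : ∏ _i : ι, (1 : ℝ) < ∏ i, (1 + hH.1.eigenvalues i) :=
    Finset.prod_lt_prod (fun _ _ ↦ one_pos) (fun i _ ↦ le_add_of_nonneg_right (hnonneg i))
      ⟨i, Finset.mem_univ i, lt_add_of_pos_right 1 ((hnonneg i).lt_of_ne' hi)⟩
  rw [Finset.prod_const_one] at h
  rw [det_one_add_eq_prod hH.1]
  exact_mod_cast h

theorem det_one_add_eq_one_iff (hH : H.PosSemidef) : (1 + H).det = 1 ↔ H = 0 :=
  ⟨fun h ↦ by_contra fun hne ↦ (one_lt_det_one_add hH hne).ne' h, by rintro rfl; simp⟩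

end DetOneAdd

section Shuffle

theorem sign_symm_trans_eq_prod_prod {κ : Type*} [Fintype κ] {n : ℕ} (e f : κ ≃ Fin n) :
    Perm.sign (e.symm.trans f) =
      ∏ x, ∏ y, if e y < e x ∧ f x < f y then (-1 : ℤˣ) else 1 := by
  rw [Perm.sign_eq_prod_prod_Iio, ← e.prod_comp]
  refine Finset.prod_congr rfl fun x _ ↦ ?_
  have hIio : Finset.Iio (e x) = Finset.univ.filter (· < e x) := by ext; simp
  rw [hIio, Finset.prod_filter, ← e.prod_comp]
  refine Finset.prod_congr rfl fun y _ ↦ ?_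
  rcases lt_or_ge (e y) (e x) with hlt | hge
  · have hne : f y ≠ f x := fun h ↦ hlt.ne (congrArg e (f.injective h))
    rcases hne.lt_or_gt with h | h <;> simp [hlt, h, h.not_gt]
  · simp [hge.not_gt]

theorem prod_range_neg_one_pow (n : ℕ) :
    ∏ i ∈ Finset.range n, (-1 : ℤˣ) ^ i = (-1) ^ (n / 2) := by
  induction n using Nat.twoStepInduction with
  | zero => rfl
  | one => rfl
  | more n ih _ =>
    have hodd : Odd (n + (n + 1)) := ⟨n, by ring⟩
    rw [Finset.prod_range_succ, Finset.prod_range_succ, ih, mul_assoc, ← pow_add,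
      hodd.neg_one_pow, Nat.add_div_right n two_pos, pow_succ]

/-- The equivalence sending `inl i` to `2 * i` and `inr i` to `2 * i + 1`. It turns the pairing
of `pfaffianSum` into that of `pf`. -/
def interleave (n : ℕ) : Fin n ⊕ Fin n ≃ Fin (2 * n) :=
  (boolProdEquivSum (Fin n)).symm.trans <| (prodComm _ _).trans <|
    ((Equiv.refl (Fin n)).prodCongr finTwoEquiv.symm).trans <|
      finProdFinEquiv.trans <| finCongr (mul_comm n 2)

variable {n : ℕ}

theorem interleave_inl (i : Fin n) : interleave n (inl i) = ⟨2 * i, by omega⟩ := by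
  ext; simp [interleave, finTwoEquiv]

theorem interleave_inr (i : Fin n) : interleave n (inr i) = ⟨2 * i + 1, by omega⟩ := by
  ext; simp [interleave, finTwoEquiv, add_comm]

theorem blockIndex_inl (i : Fin n) : blockIndex n (inl i) = ⟨i, by omega⟩ := by
  ext; simp [blockIndex]

theorem blockIndex_inr (i : Fin n) : blockIndex n (inr i) = ⟨n + i, by omega⟩ := by
  ext; simp [blockIndex, add_comm]

theorem sign_interleave_symm_trans_blockIndex (n : ℕ) :
    Perm.sign ((interleave n).symm.trans (blockIndex n)) = (-1) ^ (n / 2) := by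
  let inversion (x y : Fin n ⊕ Fin n) : ℤˣ :=
    if interleave n y < interleave n x ∧ blockIndex n x < blockIndex n y then -1 else 1
  have inl_inl (i j : Fin n) : inversion (inl i) (inl j) = 1 := by
    simp only [inversion, interleave_inl, blockIndex_inl, Fin.mk_lt_mk]; grind
  have inl_inr (i j : Fin n) : inversion (inl i) (inr j) = if j < i then -1 else 1 := by
    simp only [inversion, interleave_inl, interleave_inr, blockIndex_inl, blockIndex_inr,
      Fin.mk_lt_mk]
    grind
  have inr_inl (i j : Fin n) : inversion (inr i) (inl j) = 1 := by
    simp only [inversion, interleave_inl, interleave_inr, blockIndex_inl, blockIndex_inr,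
      Fin.mk_lt_mk]
    grind
  have inr_inr (i j : Fin n) : inversion (inr i) (inr j) = 1 := by
    simp only [inversion, interleave_inr, blockIndex_inr, Fin.mk_lt_mk]; grind
  calc Perm.sign ((interleave n).symm.trans (blockIndex n))
      = ∏ x, ∏ y, inversion x y := sign_symm_trans_eq_prod_prod _ _
    _ = ∏ i : Fin n, (-1) ^ (i : ℕ) := by
        simp [Fintype.prod_sum_type, inl_inl, inl_inr, inr_inl, inr_inr, Finset.prod_ite,
          Finset.filter_gt_eq_Iio]
    _ = (-1) ^ (n / 2) := by
        rw [Fin.prod_univ_eq_prod_range (fun i ↦ (-1 : ℤˣ) ^ i), prod_range_neg_one_pow]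

theorem sign_equivCongr_interleave_blockIndex (σ : Perm (Fin n ⊕ Fin n)) :
    Perm.sign ((interleave n).equivCongr (blockIndex n) σ) = (-1) ^ (n / 2) * Perm.sign σ := by
  rw [← sign_interleave_symm_trans_blockIndex, ← Perm.sign_permCongr (interleave n) σ,
    ← Perm.sign_mul]
  congr 1
  ext
  simp [equivCongr, permCongr_apply]

theorem neg_one_pow_mul_pf_submatrix (M : Matrix (Fin n ⊕ Fin n) (Fin n ⊕ Fin n) ℝ) :
    (-1) ^ (n / 2) * pf (M.submatrix (blockIndex n).symm (blockIndex n).symm) =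
      pfaffianSum M / (n ! * 2 ^ n) := by
  have reindex : ∑ π : Perm (Fin (2 * n)), ((Perm.sign π : ℤ) : ℝ) *
      ∏ i : Fin n, M.submatrix (blockIndex n).symm (blockIndex n).symm
        (π ⟨2 * i, by omega⟩) (π ⟨2 * i + 1, by omega⟩) = (-1) ^ (n / 2) * pfaffianSum M := by
    rw [pfaffianSum, Finset.mul_sum, ← ((interleave n).equivCongr (blockIndex n)).sum_comp]
    refine Finset.sum_congr rfl fun σ _ ↦ ?_
    rw [sign_equivCongr_interleave_blockIndex]
    simp [← interleave_inl, ← interleave_inr, mul_assoc]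
  have hsign : ((-1 : ℝ) ^ (n / 2)) * (-1) ^ (n / 2) = 1 := by rw [← mul_pow]; simp
  rw [pf, reindex]
  linear_combination (pfaffianSum M / (n ! * 2 ^ n)) * hsign

end Shuffle

open scoped MatrixOrder in
theorem exists_isUnit_eq_transpose_mul_self {ι : Type*} [Fintype ι] [DecidableEq ι]
    {B : Matrix ι ι ℝ} (hB : B.PosDef) : ∃ C : Matrix ι ι ℝ, IsUnit C ∧ B = Cᵀ * C :=
  CStarAlgebra.isStrictlyPositive_iff_eq_star_mul_self.1 hB.isStrictlyPositive

theorem exists_antisymm_eq_transpose_mul_mul {ι R : Type*} [Fintype ι] [DecidableEq ι] [CommRing R]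
    {A C : Matrix ι ι R} (hA : Aᵀ = -A) (hC : IsUnit C) :
    ∃ A', A'ᵀ = -A' ∧ A = Cᵀ * A' * C := by
  have hdet := (isUnit_iff_isUnit_det C).1 hC
  refine ⟨C⁻¹ᵀ * A * C⁻¹, by simp [hA, Matrix.mul_assoc], ?_⟩
  rw [← Matrix.mul_assoc, ← Matrix.mul_assoc, ← transpose_mul, nonsing_inv_mul C hdet,
    transpose_one, Matrix.one_mul, nonsing_inv_mul_cancel_right C A hdet]

theorem pfaffian_block_eq_det_iff (n : ℕ) (A B : Matrix (Fin n) (Fin n) ℝ)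
    (hA : Aᵀ = -A) (hBsymm : Bᵀ = B)
    (hBpd : ∀ x : Fin n → ℝ, x ≠ 0 → 0 < x ⬝ᵥ B *ᵥ x)
    (l : ℝ) (hl : 0 ≤ l) :
    (-1 : ℝ) ^ (n / 2) *
        pf ((Matrix.fromBlocks (-(l • A)) B (-B) A).submatrix
          (blockIndex n).symm (blockIndex n).symm) = B.det
      ↔ l • A = 0 := by
  have hB : B.PosDef := .of_dotProduct_mulVec_pos
    (by rwa [IsHermitian, conjTranspose_eq_transpose_of_trivial])
    fun x hx ↦ by simpa using hBpd x hx
  obtain ⟨C, hC, rfl⟩ := exists_isUnit_eq_transpose_mul_self hB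
  obtain ⟨A, hA', rfl⟩ := exists_antisymm_eq_transpose_mul_mul hA hC
  have hH : (l • (Aᵀ * A)).PosSemidef := (posSemidef_conjTranspose_mul_self A).smul hl
  rw [neg_one_pow_mul_pf_submatrix, pfaffianSum_fromBlocks_transpose_mul_self hA' hl,
    Fintype.card_fin, mul_div_cancel_right₀ _ (by positivity)]
  calc (Cᵀ * C).det * √(1 + l • (Aᵀ * A)).det = (Cᵀ * C).det
      ↔ (1 + l • (Aᵀ * A)).det = 1 := by
        rw [mul_eq_left₀ hB.det_pos.ne', Real.sqrt_eq_one]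
    _ ↔ l • (Aᵀ * A) = 0 := det_one_add_eq_one_iff hH
    _ ↔ l • A = 0 := by
        rw [smul_eq_zero, smul_eq_zero, ← conjTranspose_eq_transpose_of_trivial,
          conjTranspose_mul_self_eq_zero]
    _ ↔ l • (Cᵀ * A * C) = 0 := by
        rw [smul_eq_zero, smul_eq_zero, hC.mul_left_eq_zero,
          ((isUnit_transpose C).2 hC).mul_right_eq_zero]
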